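/- For q > 2 and any h ≥ 2, except for q = 3 and h = 2, there exists a GH code C_H of length n = q^h over 𝔽_q with ker(C_H) = k if and only if k ∈ {1, 2, …, h+1}. For q = 3 and h = 2, there exists a GH code C_H of length n = 9 over 𝔽_3 with ker(C_H) = k if and only if k ∈ {2, 3}. -/

import Mathlib

open Finset

/-- `H` is a generalized Hadamard matrix with parameter `lam`: for every pair of
distinct rows, the multiset of coordinatewise differences contains every element
of `F` exactly `lam` times. -/
def IsGH {F : Type*} [Fintype F] [DecidableEq F] [Sub F]
    {ι : Type*} [Fintype ι] (lam : ℕ) (H : Matrix ι ι F) : Prop :=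
  ∀ i j : ι, i ≠ j → ∀ a : F,
    (Finset.univ.filter (fun s => H i s - H j s = a)).card = lam

/-- A matrix is normalized if its first row and first column are all zeros. -/
def Normalized {F : Type*} [Zero F] {n : ℕ} (H : Matrix (Fin n) (Fin n) F) : Prop :=
  ∀ i s : Fin n, (i.val = 0 ∨ s.val = 0) → H i s = 0

/-- The code `F_H` whose codewords are the rows of `H`. -/
def rowSet {F ι : Type*} (H : Matrix ι ι F) : Set (ι → F) :=
  Set.range (fun i => H i)

/-- The GH code `C_H = ⋃_{α ∈ F} (F_H + α·𝟏)`. -/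
def ghCode {F ι : Type*} [Add F] (H : Matrix ι ι F) : Set (ι → F) :=
  {v | ∃ (α : F) (i : ι), v = fun s => H i s + α}

/-- The rank of a code: the dimension of its linear span. -/
noncomputable def rankC {F ι : Type*} [Field F] (C : Set (ι → F)) : ℕ :=
  Module.finrank F (Submodule.span F C)

/-- The kernel `K(C) = {x : αx + C = C for all α}` of a code. -/
def kerSet {F ι : Type*} [Mul F] [Add F] (C : Set (ι → F)) : Set (ι → F) :=
  {x | ∀ α : F, (fun c => (fun i => α * x i) + c) '' C = C}

/-- The dimension of the kernel of a code. -/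
noncomputable def kerDim {F ι : Type*} [Field F] (C : Set (ι → F)) : ℕ :=
  Module.finrank F (Submodule.span F (kerSet C))

/-- The `p`-kernel `K_p(C) = {x : x + C = C}` of a code. -/
def pKerSet {F ι : Type*} [Add F] (C : Set (ι → F)) : Set (ι → F) :=
  {x | (fun c => x + c) '' C = C}

/-- The Euclidean orthogonal code `C^⊥`. -/
def dualSet {F ι : Type*} [CommRing F] [Fintype ι] (C : Set (ι → F)) : Set (ι → F) :=
  {v | ∀ w ∈ C, ∑ i, v i * w i = 0}

/-- Two matrices are translation equivalent if the rows of one are obtained from the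
rows of the other by adding a fixed vector. -/
def TransEquiv {F ι : Type*} [Add F] (B B' : Matrix ι ι F) : Prop :=
  ∃ v : ι → F, rowSet B' = (fun b => v + b) '' rowSet B

/-- The Kronecker sum `H₁ ⊕ H₂`. -/
def kroneckerSum {F ι κ : Type*} [Add F] (H₁ : Matrix ι ι F) (H₂ : Matrix κ κ F) :
    Matrix (ι × κ) (ι × κ) F :=
  fun p r => H₁ p.1 r.1 + H₂ p.2 r.2

/-- The Kronecker sum `H₁ ⊕ [B₁, …, Bₙ]`, whose `(i,j)` block is `h_{ij} + B_i`. -/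
def kroneckerSumFam {F ι κ : Type*} [Add F] (H₁ : Matrix ι ι F) (B : ι → Matrix κ κ F) :
    Matrix (ι × κ) (ι × κ) F :=
  fun p r => H₁ p.1 r.1 + B p.1 p.2 r.2

/-- The multiplicative-table matrix `S_q` of a field. -/
def mulTable (F : Type*) [Mul F] : Matrix F F F := fun i j => i * j

/-- A code is `K`-additive, for a subfield `K`, if it is a linear space over `K`. -/
def IsAdditiveOver {F ι : Type*} [Field F] (K : Subfield F) (C : Set (ι → F)) : Prop :=
  (0 : ι → F) ∈ C ∧ (∀ x ∈ C, ∀ y ∈ C, x + y ∈ C) ∧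
    ∀ (a : K), ∀ x ∈ C, (fun i => (a : F) * x i) ∈ C

section Kernel

variable {F ι : Type*} [Field F]

theorem mem_kerSet_iff {C : Set (ι → F)} {x : ι → F} :
    x ∈ kerSet C ↔ ∀ α : F, ∀ c ∈ C, α • x + c ∈ C := by
  constructor
  · intro hx α c hc
    rw [← hx α]
    exact ⟨c, hc, rfl⟩
  · intro hx α
    apply Set.Subset.antisymm
    · rintro _ ⟨c, hc, rfl⟩
      exact hx α c hc
    · intro c hc
      refine ⟨(-α) • x + c, hx (-α) c hc, ?_⟩
      funext i
      simp

/-- The kernel of a code, as a linear subspace. -/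
def kerSubmodule (C : Set (ι → F)) : Submodule F (ι → F) where
  carrier := kerSet C
  zero_mem' := by
    rw [mem_kerSet_iff]
    intro α c hc
    simpa using hc
  add_mem' := by
    intro x y hx hy
    rw [mem_kerSet_iff] at *
    intro α c hc
    rw [smul_add, add_assoc]
    exact hx α _ (hy α c hc)
  smul_mem' := by
    intro β x hx
    rw [mem_kerSet_iff] at *
    intro α c hc
    rw [smul_smul]
    exact hx _ c hc

theorem kerDim_eq_finrank (C : Set (ι → F)) :
    kerDim C = Module.finrank F (kerSubmodule C) := by
  have : Submodule.span F (kerSet C) = kerSubmodule C := Submodule.span_eq (kerSubmodule C)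
  rw [kerDim, this]

theorem kerDim_of_kerSet_eq {C : Set (ι → F)} (K : Submodule F (ι → F))
    (hK : kerSet C = K) : kerDim C = Module.finrank F K := by
  rw [kerDim, hK, Submodule.span_eq]

theorem kerSet_image {κ : Type*} (L : (ι → F) ≃ₗ[F] (κ → F)) (C : Set (ι → F)) :
    kerSet (L '' C) = L '' kerSet C := by
  ext x
  obtain ⟨x, rfl⟩ := L.surjective x
  rw [L.injective.mem_set_image, mem_kerSet_iff, mem_kerSet_iff]
  simp only [Set.forall_mem_image, ← map_smul, ← map_add, L.injective.mem_set_image]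

theorem kerDim_image {κ : Type*} (L : (ι → F) ≃ₗ[F] (κ → F)) (C : Set (ι → F)) :
    kerDim (L '' C) = kerDim C := by
  have h : Submodule.span F (L '' kerSet C) =
      (Submodule.span F (kerSet C)).map (L : (ι → F) →ₗ[F] (κ → F)) :=
    Submodule.span_image (L : (ι → F) →ₗ[F] (κ → F))
  rw [kerDim, kerSet_image, h, LinearEquiv.finrank_map_eq, kerDim]

theorem one_mem_kerSet_ghCode (H : Matrix ι ι F) : (1 : ι → F) ∈ kerSet (ghCode H) := by
  rw [mem_kerSet_iff]
  rintro α _ ⟨β, i, rfl⟩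
  refine ⟨α + β, i, ?_⟩
  funext s
  simp only [Pi.add_apply, Pi.smul_apply, Pi.one_apply, smul_eq_mul]
  ring

variable [Fintype ι]

theorem two_le_kerDim {C : Set (ι → F)} (h1 : (1 : ι → F) ∈ kerSet C) {f : ι → F}
    (hf : f ∈ kerSet C) {x y : ι} (hxy : f x ≠ f y) : 2 ≤ kerDim C := by
  have hli : LinearIndependent F ![(1 : ι → F), f] := by
    rw [LinearIndependent.pair_iff]
    intro a b hab
    have hx := congrFun hab x
    have hy := congrFun hab y
    simp only [Pi.add_apply, Pi.smul_apply, Pi.one_apply, smul_eq_mul, Pi.zero_apply,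
      mul_one] at hx hy
    have hb : b = 0 := by
      have : b * (f x - f y) = 0 := by linear_combination hx - hy
      exact (mul_eq_zero.1 this).resolve_right (sub_ne_zero.2 hxy)
    subst hb
    simpa using hx
  have hle : Submodule.span F (Set.range ![(1 : ι → F), f]) ≤ kerSubmodule C := by
    rw [Submodule.span_le]
    rintro _ ⟨i, rfl⟩
    fin_cases i
    · exact h1
    · exact hf
  have := Submodule.finrank_mono hle
  rw [finrank_span_eq_card hli, Fintype.card_fin] at this
  rwa [kerDim_eq_finrank]

theorem one_le_kerDim_ghCode [Nonempty ι] (H : Matrix ι ι F) : 1 ≤ kerDim (ghCode H) := by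
  rw [kerDim_eq_finrank, Nat.one_le_iff_ne_zero, Ne, Submodule.finrank_eq_zero]
  intro h
  have h1 : (1 : ι → F) ∈ kerSubmodule (ghCode H) := one_mem_kerSet_ghCode H
  rw [h, Submodule.mem_bot] at h1
  exact one_ne_zero h1

variable [Fintype F]

theorem ncard_ghCode_le (H : Matrix ι ι F) :
    (ghCode H).ncard ≤ Fintype.card F * Fintype.card ι := by
  have h : ghCode H = Set.range (fun p : F × ι => fun s => H p.2 s + p.1) := by
    ext v
    simp [ghCode, eq_comm]
  rw [h, ← Fintype.card_prod, ← Nat.card_eq_fintype_card, ← Set.ncard_univ, ← Set.image_univ]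
  exact Set.ncard_image_le

theorem kerDim_ghCode_le {H : Matrix ι ι F} {h : ℕ} (h0 : (0 : ι → F) ∈ ghCode H)
    (hι : Fintype.card ι = Fintype.card F ^ h) : kerDim (ghCode H) ≤ h + 1 := by
  have hsub : (kerSubmodule (ghCode H) : Set (ι → F)) ⊆ ghCode H := by
    intro x hx
    have := mem_kerSet_iff.1 (show x ∈ kerSet (ghCode H) from hx) 1 0 h0
    simpa using this
  have h1 := (Set.ncard_le_ncard hsub).trans (ncard_ghCode_le H)
  have h2 : (kerSubmodule (ghCode H) : Set (ι → F)).ncard =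
      Fintype.card F ^ kerDim (ghCode H) := by
    rw [kerDim_eq_finrank, ← Nat.card_coe_set_eq, ← Nat.card_eq_fintype_card (α := F)]
    exact Module.natCard_eq_pow_finrank
  rw [h2, hι, ← pow_succ'] at h1
  exact (Nat.pow_le_pow_iff_right Fintype.one_lt_card).1 h1

end Kernel

section Reindex

variable {F : Type*} [Field F] [Fintype F] [DecidableEq F]

theorem exists_normalized_of_card {ι : Type*} [Fintype ι] {n lam : ℕ}
    (hn : Fintype.card ι = n) {H : Matrix ι ι F} (hH : IsGH lam H) (z : ι)
    (hz : ∀ i s, (i = z ∨ s = z) → H i s = 0) :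
    ∃ H' : Matrix (Fin n) (Fin n) F,
      IsGH lam H' ∧ Normalized H' ∧ kerDim (ghCode H') = kerDim (ghCode H) := by
  classical
  have hpos : 0 < n := hn ▸ Fintype.card_pos_iff.2 ⟨z⟩
  let e₀ := Fintype.equivFinOfCardEq hn
  let e : ι ≃ Fin n := e₀.trans (Equiv.swap (e₀ z) ⟨0, hpos⟩)
  have hez : e z = ⟨0, hpos⟩ := by simp [e]
  have hsymm : ∀ i : Fin n, i.val = 0 → e.symm i = z := by
    intro i hi
    rw [Equiv.symm_apply_eq, hez]
    exact Fin.ext hi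
  refine ⟨fun i s => H (e.symm i) (e.symm s), ?_, ?_, ?_⟩
  · intro i j hij a
    rw [← hH (e.symm i) (e.symm j) (e.symm.injective.ne hij) a]
    refine Finset.card_equiv e.symm ?_
    simp
  · rintro i s (h | h)
    · exact hz _ _ (Or.inl (hsymm i h))
    · exact hz _ _ (Or.inr (hsymm s h))
  · rw [← kerDim_image (LinearEquiv.funCongrLeft F F e.symm) (ghCode H)]
    congr 1
    ext v
    constructor
    · rintro ⟨α, i, rfl⟩
      exact ⟨fun s => H (e.symm i) s + α, ⟨α, e.symm i, rfl⟩, rfl⟩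
    · rintro ⟨_, ⟨α, i, rfl⟩, rfl⟩
      refine ⟨α, e i, ?_⟩
      funext s
      simp [LinearEquiv.funCongrLeft_apply, LinearMap.funLeft_apply]

end Reindex

section OrderNine

variable {ι : Type*} [Fintype ι]

/-- The number of coordinates at which `u` takes the value `a`. -/
def valueCount (u : ι → ZMod 3) (a : ZMod 3) : ℕ :=
  (Finset.univ.filter fun x => u x = a).card

/-- A ternary vector is balanced if it takes every value exactly three times. -/
def IsBalanced (u : ι → ZMod 3) : Prop := ∀ a, valueCount u a = 3

theorem valueCount_eq_sum (u : ι → ZMod 3) (a : ZMod 3) :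
    valueCount u a = ∑ x, if u x = a then 1 else 0 := by
  rw [valueCount, Finset.card_filter]

theorem sum_valueCount_sq (u : ι → ZMod 3) :
    ∑ a, valueCount u a ^ 2 = ∑ x, ∑ y, if u x = u y then 1 else 0 := by
  simp only [valueCount_eq_sum, sq, Finset.sum_mul_sum]
  rw [Finset.sum_comm]
  refine Finset.sum_congr rfl fun x _ => ?_
  rw [Finset.sum_comm]
  refine Finset.sum_congr rfl fun y _ => ?_
  simp [eq_comm]

theorem sum_valueCount (u : ι → ZMod 3) : ∑ a, valueCount u a = Fintype.card ι := by
  simp only [valueCount_eq_sum]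
  rw [Finset.sum_comm]
  simp

theorem zmod3_sum (f : ZMod 3 → ℕ) : ∑ a, f a = f 0 + f 1 + f 2 :=
  Fin.sum_univ_three f

theorem zmod3_forall {p : ZMod 3 → Prop} : (∀ a, p a) ↔ p 0 ∧ p 1 ∧ p 2 :=
  Fin.forall_fin_succ.trans (and_congr_right fun _ => Fin.forall_fin_two)

theorem eq_one_or_eq_neg_one {ε : ZMod 3} (hε : ε ≠ 0) : ε = 1 ∨ ε = -1 := by
  revert ε
  decide

theorem three_eq_zero : (3 : ZMod 3) = 0 := rfl

theorem IsBalanced.of_affine {u w : ι → ZMod 3} (hw : IsBalanced w) (ε c : ZMod 3) (hε : ε ≠ 0)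
    (h : ∀ x, u x = ε * w x + c) : IsBalanced u := by
  intro a
  rw [← hw (ε * (a - c))]
  unfold valueCount
  congr 1
  ext x
  simp only [Finset.mem_filter, Finset.mem_univ, true_and, h]
  generalize w x = y
  clear h hw
  revert ε c a y
  decide

theorem IsBalanced.ne_const {u : ι → ZMod 3} (hu : IsBalanced u) (c : ZMod 3) :
    ¬ ∀ x, u x = c := by
  intro h
  have := hu (c + 1)
  simp [valueCount, h] at this

theorem nine_le_sum_sq {a b c : ℕ} (h : a + b + c = 9) : 27 ≤ a ^ 2 + b ^ 2 + c ^ 2 := by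
  zify at *
  nlinarith [sq_nonneg ((a : ℤ) - 3), sq_nonneg ((b : ℤ) - 3), sq_nonneg ((c : ℤ) - 3)]

theorem eq_three_of_sum_sq {a b c : ℕ} (h : a + b + c = 9) (h2 : a ^ 2 + b ^ 2 + c ^ 2 = 27) :
    a = 3 ∧ b = 3 ∧ c = 3 := by
  have ha : a ≤ 9 := by omega
  have hb : b ≤ 9 := by omega
  obtain rfl : c = 9 - a - b := by omega
  interval_cases a <;> interval_cases b <;> simp_all

theorem IsBalanced.sum_sq {u : ι → ZMod 3} (hu : IsBalanced u) : ∑ a, valueCount u a ^ 2 = 27 := by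
  rw [zmod3_sum, hu, hu, hu]
  norm_num

/-- The number of coordinates at which `u` and `w` take the values `a` and `b`. -/
def pairCount (u w : ι → ZMod 3) (a b : ZMod 3) : ℕ :=
  (Finset.univ.filter fun x => u x = a ∧ w x = b).card

theorem valueCount_eq_pairCount (u w v : ι → ZMod 3) (k : ZMod 3 → ZMod 3) (a : ZMod 3)
    (h : ∀ x, v x = a ↔ w x = k (u x)) :
    valueCount v a = pairCount u w 0 (k 0) + pairCount u w 1 (k 1) + pairCount u w 2 (k 2) := by
  rw [← zmod3_sum fun b => pairCount u w b (k b), valueCount,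
    Finset.card_eq_sum_card_fiberwise (f := u) (t := Finset.univ) (by simp)]
  refine Finset.sum_congr rfl fun b _ => ?_
  rw [pairCount, Finset.filter_filter]
  congr 1
  ext x
  simp only [Finset.mem_filter, Finset.mem_univ, true_and, h]
  constructor
  · rintro ⟨h1, rfl⟩
    exact ⟨rfl, h1⟩
  · rintro ⟨rfl, h1⟩
    exact ⟨h1, rfl⟩

theorem valueCount_fst (u w : ι → ZMod 3) (a : ZMod 3) :
    valueCount u a = pairCount u w a 0 + pairCount u w a 1 + pairCount u w a 2 := by
  rw [← zmod3_sum fun b => pairCount u w a b, valueCount,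
    Finset.card_eq_sum_card_fiberwise (f := w) (t := Finset.univ) (by simp)]
  refine Finset.sum_congr rfl fun b _ => ?_
  rw [pairCount, Finset.filter_filter]

/-- Two balanced vectors whose sum and difference are balanced. -/
structure Orthog (u w : ι → ZMod 3) : Prop where
  left : IsBalanced u
  right : IsBalanced w
  sub : IsBalanced fun x => w x - u x
  add : IsBalanced fun x => w x + u x

theorem pairCount_equations {u w : ι → ZMod 3} (hu : IsBalanced u) (hw : IsBalanced w)
    (hs : IsBalanced fun x => w x - u x) :
    (∀ a, pairCount u w a 0 + pairCount u w a 1 + pairCount u w a 2 = 3) ∧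
    (∀ b, pairCount u w 0 b + pairCount u w 1 b + pairCount u w 2 b = 3) ∧
    (∀ c, pairCount u w 0 c + pairCount u w 1 (1 + c) + pairCount u w 2 (2 + c) = 3) := by
  refine ⟨fun a => ?_, fun b => ?_, fun c => ?_⟩
  · rw [← valueCount_fst, hu]
  · refine Eq.trans ?_ (hw b)
    rw [valueCount_eq_pairCount u w w (fun _ => b) b fun _ => Iff.rfl]
  · refine Eq.trans ?_ (hs c)
    rw [valueCount_eq_pairCount u w _ (fun y => y + c) c, zero_add]
    intro x
    rw [sub_eq_iff_eq_add, add_comm]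

theorem sum_count {u w : ι → ZMod 3} (c : ZMod 3) :
    valueCount (fun x => w x + u x) c =
      pairCount u w 0 c + pairCount u w 1 (c - 1) + pairCount u w 2 (c - 2) := by
  rw [valueCount_eq_pairCount u w _ (fun y => c - y) c, sub_zero]
  intro x
  rw [eq_sub_iff_add_eq]

theorem Orthog.pairCount_eq_one {u w : ι → ZMod 3} (h : Orthog u w) (a b : ZMod 3) :
    pairCount u w a b = 1 := by
  obtain ⟨h1, h2, h3⟩ := pairCount_equations h.left h.right h.sub
  have h4 := fun c => (sum_count (u := u) (w := w) c).symm.trans (h.add c)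
  rw [zmod3_forall] at h1 h2 h3 h4
  simp only [show (1 : ZMod 3) + 0 = 1 from rfl, show (2 : ZMod 3) + 0 = 2 from rfl,
    show (1 : ZMod 3) + 1 = 2 from rfl, show (1 : ZMod 3) + 2 = 0 from rfl,
    show (2 : ZMod 3) + 1 = 0 from rfl, show (2 : ZMod 3) + 2 = 1 from rfl] at h3
  simp only [show (0 : ZMod 3) - 1 = 2 from rfl, show (0 : ZMod 3) - 2 = 1 from rfl,
    show (1 : ZMod 3) - 1 = 0 from rfl, show (1 : ZMod 3) - 2 = 2 from rfl,
    show (2 : ZMod 3) - 1 = 1 from rfl, show (2 : ZMod 3) - 2 = 0 from rfl] at h4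
  revert a b
  simp only [zmod3_forall]
  omega

theorem balanced_add_or_le {u w : ι → ZMod 3} (hu : IsBalanced u) (hw : IsBalanced w)
    (hs : IsBalanced fun x => w x - u x) :
    IsBalanced (fun x => w x + u x) ∨ 45 ≤ ∑ a, valueCount (fun x => w x + u x) a ^ 2 := by
  obtain ⟨h1, h2, h3⟩ := pairCount_equations hu hw hs
  simp only [IsBalanced, zmod3_sum, sum_count]
  rw [zmod3_forall] at h1 h2 h3 ⊢
  simp only [show (1 : ZMod 3) + 0 = 1 from rfl, show (2 : ZMod 3) + 0 = 2 from rfl,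
    show (1 : ZMod 3) + 1 = 2 from rfl, show (1 : ZMod 3) + 2 = 0 from rfl,
    show (2 : ZMod 3) + 1 = 0 from rfl, show (2 : ZMod 3) + 2 = 1 from rfl] at h3
  simp only [show (0 : ZMod 3) - 1 = 2 from rfl, show (0 : ZMod 3) - 2 = 1 from rfl,
    show (1 : ZMod 3) - 1 = 0 from rfl, show (1 : ZMod 3) - 2 = 2 from rfl,
    show (2 : ZMod 3) - 1 = 1 from rfl, show (2 : ZMod 3) - 2 = 0 from rfl]
  generalize pairCount u w 0 0 = n00 at *
  generalize pairCount u w 0 1 = n01 at *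
  generalize pairCount u w 0 2 = n02 at *
  have e1 : pairCount u w 1 2 = n00 := by omega
  have e2 : pairCount u w 2 1 = n00 := by omega
  have e3 : pairCount u w 1 0 = n01 := by omega
  have e4 : pairCount u w 2 2 = n01 := by omega
  have e5 : pairCount u w 1 1 = n02 := by omega
  have e6 : pairCount u w 2 0 = n02 := by omega
  rw [e1, e2, e3, e4, e5, e6]
  have h0 : n00 + n01 + n02 = 3 := by omega
  clear h1 h2 h3 e1 e2 e3 e4 e5 e6
  have : n00 ≤ 3 := by omega
  have : n01 ≤ 3 := by omega
  obtain rfl : n02 = 3 - n00 - n01 := by omega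
  interval_cases n00 <;> interval_cases n01 <;> simp_all

theorem Orthog.bijective {f g : ι → ZMod 3} (h : Orthog f g) :
    Function.Bijective fun x => (f x, g x) := by
  constructor
  · intro x y hxy
    simp only [Prod.mk.injEq] at hxy
    have h1 := h.pairCount_eq_one (f x) (g x)
    rw [pairCount, Finset.card_eq_one] at h1
    obtain ⟨z, hz⟩ := h1
    have hx : x ∈ ({z} : Finset ι) := by rw [← hz]; simp
    have hy : y ∈ ({z} : Finset ι) := by rw [← hz]; simp [hxy]
    rw [Finset.mem_singleton] at hx hy
    rw [hx, hy]
  · rintro ⟨a, b⟩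
    have h1 := h.pairCount_eq_one a b
    rw [pairCount, Finset.card_eq_one] at h1
    obtain ⟨z, hz⟩ := h1
    have hx : z ∈ Finset.univ.filter fun x => f x = a ∧ g x = b := by rw [hz]; simp
    exact ⟨z, by simpa using hx⟩

theorem Orthog.valueCount_eq {f g v : ι → ZMod 3} (h : Orthog f g) (V : ZMod 3 → ZMod 3 → ZMod 3)
    (hv : ∀ x, v x = V (f x) (g x)) (a : ZMod 3) :
    valueCount v a = ∑ s, ∑ t, if V s t = a then 1 else 0 := by
  rw [valueCount_eq_sum, ← Fintype.sum_prod_type' (f := fun s t => if V s t = a then 1 else 0)]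
  exact Fintype.sum_bijective _ h.bijective _ _ fun x => by rw [hv]

theorem exists_affine_of_injective (φ : ZMod 3 → ZMod 3) (hφ : Function.Injective φ) :
    ∃ ε c : ZMod 3, ε ≠ 0 ∧ ∀ t, φ t = ε * t + c := by
  revert φ
  decide

theorem slopes_eq (e₀ e₁ e₂ n₀ n₁ n₂ : ZMod 3) (h₀ : e₀ ≠ 0) (h₁ : e₁ ≠ 0) (h₂ : e₂ ≠ 0)
    (h : ∀ a, (∑ t, if t - (e₀ * t + n₀) = a then 1 else 0) +
      (∑ t, if t - (e₁ * t + n₁) = a then 1 else 0) +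
      (∑ t, if t - (e₂ * t + n₂) = a then 1 else 0) = 3) :
    (e₀ = 1 ∧ e₁ = 1 ∧ e₂ = 1) ∨ (e₀ = 2 ∧ e₁ = 2 ∧ e₂ = 2) := by
  revert e₀ e₁ e₂ n₀ n₁ n₂
  simp only [zmod3_sum]
  decide +kernel

theorem Orthog.sub_or_add {f g c : ι → ZMod 3} (hg : Orthog f g) (hc : Orthog f c)
    (hgc : IsBalanced fun x => g x - c x) :
    (∃ ψ : ZMod 3 → ZMod 3, ∀ x, g x - c x = ψ (f x)) ∨
      ∃ ψ : ZMod 3 → ZMod 3, ∀ x, g x + c x = ψ (f x) := by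
  let e := Equiv.ofBijective _ hg.bijective
  have he : ∀ s t, f (e.symm (s, t)) = s ∧ g (e.symm (s, t)) = t := by
    intro s t
    have := e.apply_symm_apply (s, t)
    exact Prod.mk.inj this
  have hinj : ∀ s, Function.Injective fun t => c (e.symm (s, t)) := by
    intro s t t' htt
    have := @hc.bijective.1 (e.symm (s, t)) (e.symm (s, t'))
      (Prod.ext ((he s t).1.trans (he s t').1.symm) htt)
    exact (Prod.mk.inj (e.symm.injective this)).2
  choose ε η hε hη using fun s => exists_affine_of_injective _ (hinj s)
  have hc' : ∀ x, c x = ε (f x) * g x + η (f x) := by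
    intro x
    rw [← hη]
    exact congrArg c (e.symm_apply_apply x).symm
  have hcount := fun a => (hg.valueCount_eq (v := fun x => g x - c x)
    (fun s t => t - (ε s * t + η s)) (fun x => by rw [hc']) a).symm.trans (hgc a)
  have := slopes_eq (ε 0) (ε 1) (ε 2) (η 0) (η 1) (η 2) (hε 0) (hε 1) (hε 2)
    fun a => by
      have := hcount a
      rwa [zmod3_sum fun s => ∑ t, if t - (ε s * t + η s) = a then 1 else 0] at this
  rcases this with h | h
  · have h' : ∀ s, ε s = 1 := zmod3_forall.2 h
    refine Or.inl ⟨fun s => -η s, fun x => ?_⟩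
    rw [hc', h']
    ring
  · have h' : ∀ s, ε s = 2 := zmod3_forall.2 h
    refine Or.inr ⟨η, fun x => ?_⟩
    rw [hc', h']
    linear_combination g x * three_eq_zero

theorem exists_affine_of_comp {f : ι → ZMod 3} {ψ : ZMod 3 → ZMod 3}
    (h : IsBalanced fun x => ψ (f x)) :
    ∃ ε c : ZMod 3, ε ≠ 0 ∧ ∀ t, ψ t = ε * t + c := by
  have hsurj : Function.Surjective ψ := by
    intro a
    have h1 := h a
    rw [valueCount] at h1
    obtain ⟨x, hx⟩ := Finset.card_pos.1 (h1.symm ▸ three_pos)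
    exact ⟨f x, (Finset.mem_filter.1 hx).2⟩
  exact exists_affine_of_injective ψ (Finite.injective_iff_surjective.2 hsurj)

theorem Orthog.affine_or_balanced {f g c : ι → ZMod 3} (hg : Orthog f g) (hc : Orthog f c)
    (hgc : IsBalanced fun x => g x - c x) :
    (∃ ε d : ZMod 3, ε ≠ 0 ∧ ∀ x, g x - c x = ε * f x + d) ∨
      IsBalanced fun x => g x - c x + f x := by
  rcases hg.sub_or_add hc hgc with ⟨ψ, hψ⟩ | ⟨ψ, hψ⟩
  · left
    obtain ⟨ε, d, hε, h⟩ := exists_affine_of_comp (f := f) (ψ := ψ) (by simpa only [hψ] using hgc)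
    exact ⟨ε, d, hε, fun x => (hψ x).trans (h _)⟩
  · right
    intro a
    rw [hg.valueCount_eq (fun s t => 2 * t + (s - ψ s)) fun x => by
      linear_combination -(hψ x), zmod3_sum]
    generalize (0 : ZMod 3) - ψ 0 = p
    generalize (1 : ZMod 3) - ψ 1 = q
    generalize (2 : ZMod 3) - ψ 2 = r
    simp only [zmod3_sum]
    clear hgc hψ hg hc
    revert a p q r
    decide

theorem Orthog.exists_affine_sub {f : ι → ZMod 3} {g : Fin 3 → ι → ZMod 3}
    (hg : ∀ i, Orthog f (g i)) (hd : ∀ i j, i ≠ j → IsBalanced fun x => g i x - g j x) :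
    ∃ i j, i < j ∧ ∃ ε d : ZMod 3, ε ≠ 0 ∧ ∀ x, g i x - g j x = ε * f x + d := by
  have key : ∃ i j, i < j ∧ ∃ ψ : ZMod 3 → ZMod 3, ∀ x, g i x - g j x = ψ (f x) := by
    rcases (hg 0).sub_or_add (hg 1) (hd 0 1 (by decide)) with h | ⟨ψ, hψ⟩
    · exact ⟨0, 1, by decide, h⟩
    rcases (hg 0).sub_or_add (hg 2) (hd 0 2 (by decide)) with h | ⟨ψ', hψ'⟩
    · exact ⟨0, 2, by decide, h⟩
    refine ⟨1, 2, by decide, fun s => ψ s - ψ' s, fun x => ?_⟩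
    linear_combination hψ x - hψ' x
  obtain ⟨i, j, hij, ψ, hψ⟩ := key
  obtain ⟨ε, d, hε, h⟩ := exists_affine_of_comp (f := f) (ψ := ψ)
    (by simpa only [hψ] using hd i j hij.ne)
  exact ⟨i, j, hij, ε, d, hε, fun x => (hψ x).trans (h _)⟩

theorem IsGH.isBalanced_sub {H : Matrix ι ι (ZMod 3)} (hH : IsGH 3 H) {i j : ι} (hij : i ≠ j) :
    IsBalanced fun x => H i x - H j x :=
  hH i j hij

theorem valueCount_const_sq {u : ι → ZMod 3} (c : ZMod 3) (h : ∀ x, u x = c) :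
    ∑ a, valueCount u a ^ 2 = Fintype.card ι ^ 2 := by
  rw [sum_valueCount_sq]
  simp [h, sq]

section Card

variable (hι : Fintype.card ι = 9) {H : Matrix ι ι (ZMod 3)} (hH : IsGH 3 H)

include hι hH

theorem sum_column_sq :
    ∑ x, ∑ y, ∑ a, valueCount (fun m => H m x - H m y) a ^ 2 = 2673 := by
  classical
  have h1 : ∑ x, ∑ y, ∑ a, valueCount (fun m => H m x - H m y) a ^ 2 =
      ∑ m, ∑ m', ∑ a, valueCount (fun x => H m x - H m' x) a ^ 2 := by
    simp only [sum_valueCount_sq]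
    have swap := Finset.sum_comm (s := Finset.univ) (t := Finset.univ)
      (f := fun p r : ι × ι =>
        if H r.1 p.1 - H r.1 p.2 = H r.2 p.1 - H r.2 p.2 then 1 else 0)
    simp only [Fintype.sum_prod_type] at swap
    rw [swap]
    refine Finset.sum_congr rfl fun m _ => Finset.sum_congr rfl fun m' _ =>
      Finset.sum_congr rfl fun x _ => Finset.sum_congr rfl fun y _ => ?_
    congr 1
    rw [eq_iff_iff]
    constructor <;> intro h <;> linear_combination h
  rw [h1]
  have h2 : ∀ m m', ∑ a, valueCount (fun x => H m x - H m' x) a ^ 2 =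
      27 + if m = m' then 54 else 0 := by
    intro m m'
    by_cases h : m = m'
    · subst h
      rw [valueCount_const_sq 0 fun x => sub_self _, hι]
      simp
    · rw [(hH.isBalanced_sub h).sum_sq, if_neg h]
  simp [h2, Finset.sum_add_distrib, hι]

theorem isBalanced_column {x y : ι} (hxy : x ≠ y) : IsBalanced fun m => H m x - H m y := by
  classical
  have hdiag : ∀ x, ∑ a, valueCount (fun m => H m x - H m x) a ^ 2 = 81 := fun x => by
    rw [valueCount_const_sq 0 fun m => sub_self _, hι]
    norm_num
  have hle : ∀ p : ι × ι, 27 + (if p.1 = p.2 then 54 else 0) ≤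
      ∑ a, valueCount (fun m => H m p.1 - H m p.2) a ^ 2 := by
    rintro ⟨x, y⟩
    by_cases h : x = y
    · subst h
      rw [hdiag, if_pos rfl]
    · rw [if_neg h, zmod3_sum]
      refine nine_le_sum_sq ?_
      rw [← hι, ← sum_valueCount fun m => H m x - H m y, zmod3_sum]
  have hsum : ∑ p : ι × ι, (27 + (if p.1 = p.2 then 54 else 0)) =
      ∑ p : ι × ι, ∑ a, valueCount (fun m => H m p.1 - H m p.2) a ^ 2 := by
    rw [Fintype.sum_prod_type, Fintype.sum_prod_type, sum_column_sq hι hH]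
    simp [Finset.sum_add_distrib, hι]
  have heq := (Finset.sum_eq_sum_iff_of_le fun p _ => hle p).1 hsum (x, y) (Finset.mem_univ _)
  simp only [if_neg hxy, zmod3_sum] at heq
  have h9 : valueCount (fun m => H m x - H m y) 0 + valueCount (fun m => H m x - H m y) 1 +
      valueCount (fun m => H m x - H m y) 2 = 9 := by
    rw [← hι, ← sum_valueCount fun m => H m x - H m y, zmod3_sum]
  exact zmod3_forall.2 (eq_three_of_sum_sq h9 heq.symm)

/-- The Parseval identity for the rows of a generalized Hadamard matrix. -/
theorem sum_row_sq (u : ι → ZMod 3) :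
    ∑ m, ∑ a, valueCount (fun x => u x - H m x) a ^ 2 = 297 := by
  classical
  simp only [sum_valueCount_sq]
  rw [Finset.sum_comm]
  have h : ∀ x y, ∑ m, (if u x - H m x = u y - H m y then 1 else 0) =
      3 + if x = y then 6 else 0 := by
    intro x y
    by_cases h : x = y
    · subst h
      simp [hι]
    · rw [if_neg h, add_zero]
      refine Eq.trans ?_ (isBalanced_column hι hH h (u x - u y))
      rw [valueCount_eq_sum]
      refine Finset.sum_congr rfl fun m _ => ?_
      congr 1
      rw [eq_iff_iff]
      constructor <;> intro h <;> linear_combination -h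
  have h' : ∀ x, ∑ m, ∑ y, (if u x - H m x = u y - H m y then 1 else 0) = 33 := by
    intro x
    rw [Finset.sum_comm]
    simp [h, Finset.sum_add_distrib, hι]
  rw [Finset.sum_congr rfl fun x _ => h' x]
  simp [hι]

end Card

section Lines

variable (hι : Fintype.card ι = 9) {H : Matrix ι ι (ZMod 3)} (hH : IsGH 3 H)

include hH in
theorem IsGH.orthog {i j m : ι} (hij : i ≠ j) (hmi : m ≠ i) (hmj : m ≠ j)
    (h : IsBalanced fun x => H i x + H j x + H m x) :
    Orthog (fun x => H j x - H i x) fun x => H m x - H i x where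
  left := hH.isBalanced_sub hij.symm
  right := hH.isBalanced_sub hmi
  sub := by simpa using hH.isBalanced_sub hmj
  add := h.of_affine 1 0 one_ne_zero fun x => by
    linear_combination (-H i x) * three_eq_zero

include hι hH in
theorem card_unbalanced_le [DecidableEq ι] {i j : ι} (hij : i ≠ j) (s : Finset ι)
    (hs : ∀ m ∈ s, m ≠ i ∧ m ≠ j ∧ ¬ IsBalanced fun x => H i x + H j x + H m x) :
    s.card ≤ 3 := by
  have hle : ∀ m, 27 + (if m ∈ s then 18 else 0) ≤
      ∑ a, valueCount (fun x => (-H i x - H j x) - H m x) a ^ 2 := by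
    intro m
    by_cases hm : m ∈ s
    · obtain ⟨hmi, hmj, hb⟩ := hs m hm
      rw [if_pos hm]
      have h := balanced_add_or_le (hH.isBalanced_sub hij.symm) (hH.isBalanced_sub hmi)
        (by simpa using hH.isBalanced_sub hmj)
      rcases h with h | h
      · exact absurd (h.of_affine 1 0 one_ne_zero fun x => by
          linear_combination (H i x) * three_eq_zero) hb
      · refine h.trans_eq ?_
        rw [sum_valueCount_sq, sum_valueCount_sq]
        refine Finset.sum_congr rfl fun x _ => Finset.sum_congr rfl fun y _ => ?_
        congr 1
        rw [eq_iff_iff]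
        constructor <;> intro h
        · linear_combination -h + (H i y - H i x) * three_eq_zero
        · linear_combination -h + (H i y - H i x) * three_eq_zero
    · rw [if_neg hm, zmod3_sum]
      refine nine_le_sum_sq ?_
      rw [← hι, ← sum_valueCount fun x => (-H i x - H j x) - H m x, zmod3_sum]
  have hsum := Finset.sum_le_sum fun m (_ : m ∈ Finset.univ) => hle m
  rw [sum_row_sq hι hH, Finset.sum_add_distrib] at hsum
  simp [hι] at hsum
  omega

include hι hH in
theorem exists_line : ∃ i j k : ι, i ≠ j ∧ i ≠ k ∧ j ≠ k ∧
    ∃ c, ∀ x, H i x + H j x + H k x = c := by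
  classical
  by_contra hno
  have noline : ∀ {i j k : ι}, i ≠ j → i ≠ k → j ≠ k → ∀ c : ZMod 3,
      ¬ ∀ x, H i x + H j x + H k x = c := fun hij hik hjk c h =>
    hno ⟨_, _, _, hij, hik, hjk, c, h⟩
  -- a triple of rows whose pairwise sums with two fixed rows stay balanced is impossible
  have nopar : ∀ {p q r s : ι}, p ≠ s → q ≠ p → q ≠ s → r ≠ p → r ≠ s → q ≠ r →
      ∀ c : ZMod 3, ¬ ∀ x, H p x + H s x = H q x + H r x + c := by
    intro p q r s hps hqp hqs hrp hrs hqr c hpar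
    have hbal_q : IsBalanced fun x => H p x + H s x + H q x :=
      (hH.isBalanced_sub hqr).of_affine 2 c (by decide) fun x => by
        linear_combination hpar x + H r x * three_eq_zero
    have hbal_r : IsBalanced fun x => H p x + H s x + H r x :=
      (hH.isBalanced_sub hqr).of_affine 1 c (by decide) fun x => by
        linear_combination hpar x + H r x * three_eq_zero
    have hun : ∀ m ∈ ({p, q, r, s} : Finset ι)ᶜ,
        m ≠ p ∧ m ≠ s ∧ ¬ IsBalanced fun x => H p x + H s x + H m x := by
      intro m hm
      simp only [Finset.mem_compl, Finset.mem_insert, Finset.mem_singleton, not_or] at hm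
      obtain ⟨hmp, hmq, hmr, hms⟩ := hm
      refine ⟨hmp, hms, fun hb => ?_⟩
      obtain ⟨i, j, hij, ε, d, hε, h⟩ := Orthog.exists_affine_sub
        (f := fun x => H s x - H p x)
        (g := fun i x => H (![m, q, r] i) x - H p x)
        (by
          intro i
          fin_cases i
          · exact hH.orthog hps hmp hms hb
          · exact hH.orthog hps hqp hqs hbal_q
          · exact hH.orthog hps hrp hrs hbal_r)
        (by
          intro i j hij
          have : ![m, q, r] i ≠ ![m, q, r] j := by
            fin_cases i <;> fin_cases j <;> simp_all [eq_comm]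
          simpa using hH.isBalanced_sub this)
      have hε' := eq_one_or_eq_neg_one hε
      fin_cases i <;> fin_cases j <;> simp at hij
      · replace h : ∀ x, H m x - H p x - (H q x - H p x) = ε * (H s x - H p x) + d := h
        rcases hε' with rfl | rfl
        · exact noline hmr hms hrs (d - c) fun x => by
            linear_combination h x - hpar x + H s x * three_eq_zero
        · exact noline hmr hmp hrp (d - c) fun x => by
            linear_combination h x - hpar x + H p x * three_eq_zero
      · replace h : ∀ x, H m x - H p x - (H r x - H p x) = ε * (H s x - H p x) + d := h
        rcases hε' with rfl | rfl
        · exact noline hmq hms hqs (d - c) fun x => by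
            linear_combination h x - hpar x + H s x * three_eq_zero
        · exact noline hmq hmp hqp (d - c) fun x => by
            linear_combination h x - hpar x + H p x * three_eq_zero
      · replace h : ∀ x, H q x - H p x - (H r x - H p x) = ε * (H s x - H p x) + d := h
        rcases hε' with rfl | rfl
        · exact (hH.isBalanced_sub hqs).ne_const (c - d) fun x => by
            linear_combination 2 * h x - 2 * hpar x + (d - c - (H q x - H s x)) * three_eq_zero
        · exact (hH.isBalanced_sub hqp).ne_const (c - d) fun x => by
            linear_combination 2 * h x - 2 * hpar x + (d - c - (H q x - H p x)) * three_eq_zero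
    have h3 := card_unbalanced_le hι hH hps _ hun
    have h4 : ({p, q, r, s} : Finset ι).card ≤ 4 := Finset.card_le_four
    rw [Finset.card_compl, hι] at h3
    omega
  obtain ⟨i, j, hij⟩ : ∃ i j : ι, i ≠ j :=
    (Fintype.one_lt_card_iff.1 (by rw [hι]; norm_num))
  let B : Finset ι := Finset.univ.filter fun m =>
    m ≠ i ∧ m ≠ j ∧ IsBalanced fun x => H i x + H j x + H m x
  let U : Finset ι := Finset.univ.filter fun m =>
    m ≠ i ∧ m ≠ j ∧ ¬ IsBalanced fun x => H i x + H j x + H m x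
  have hU : U.card ≤ 3 := card_unbalanced_le hι hH hij U fun m hm => (Finset.mem_filter.1 hm).2
  have hcover : Finset.univ ⊆ {i, j} ∪ B ∪ U := by
    intro m _
    simp only [B, U, Finset.mem_union, Finset.mem_insert, Finset.mem_singleton,
      Finset.mem_filter, Finset.mem_univ, true_and]
    tauto
  have hB : 3 ≤ B.card := by
    have h1 := (Finset.card_le_card hcover).trans
      ((Finset.card_union_le _ _).trans (Nat.add_le_add_right (Finset.card_union_le _ _) _))
    rw [Finset.card_univ, hι, Finset.card_pair hij] at h1
    omega
  obtain ⟨B', hB', hcard⟩ := Finset.exists_subset_card_eq hB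
  let e : Fin 3 ≃ B' := (B'.equivFinOfCardEq hcard).symm
  have hmem : ∀ a, (e a : ι) ≠ i ∧ (e a : ι) ≠ j ∧
      IsBalanced fun x => H i x + H j x + H (e a) x := fun a =>
    (Finset.mem_filter.1 (hB' (e a).2)).2
  have hne : ∀ a b, a ≠ b → (e a : ι) ≠ e b := fun a b hab h =>
    hab (e.injective (Subtype.ext h))
  obtain ⟨a, b, hab, ε, d, hε, h⟩ := Orthog.exists_affine_sub
    (f := fun x => H j x - H i x) (g := fun a x => H (e a) x - H i x)
    (fun a => hH.orthog hij (hmem a).1 (hmem a).2.1 (hmem a).2.2)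
    (fun a b hab => by simpa using hH.isBalanced_sub (hne a b hab))
  obtain ⟨hai, haj, -⟩ := hmem a
  obtain ⟨hbi, hbj, -⟩ := hmem b
  rcases eq_one_or_eq_neg_one hε with rfl | rfl
  · exact nopar hai (hne b a hab.ne') hbi haj.symm hij.symm hbj d fun x => by
      linear_combination h x
  · exact nopar haj (hne b a hab.ne') hbj hai.symm hij hbi d fun x => by
      linear_combination h x

include hι hH in
/-- A difference of two rows lying on a line of three rows translates the code into itself. -/
theorem exists_row_add {i j k : ι} (hij : i ≠ j) {c : ZMod 3}
    (hc : ∀ x, H i x + H j x + H k x = c) (r : ι) :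
    ∃ m, ∃ d : ZMod 3, ∀ x, H r x + (H j x - H i x) = H m x + d := by
  by_cases hri : r = i
  · exact ⟨j, 0, fun x => by rw [hri]; ring⟩
  by_cases hrj : r = j
  · exact ⟨k, -c, fun x => by
      rw [hrj]; linear_combination -hc x + H j x * three_eq_zero⟩
  by_cases hrk : r = k
  · exact ⟨i, c, fun x => by
      rw [hrk]; linear_combination hc x - H i x * three_eq_zero⟩
  by_contra hno
  have hno' : ∀ m d, ¬ ∀ x, H r x + (H j x - H i x) = H m x + d := fun m d h => hno ⟨m, d, h⟩
  have orth : ∀ m, m ≠ i → m ≠ j → m ≠ k →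
      Orthog (fun x => H j x - H i x) fun x => H m x - H i x := fun m hmi hmj hmk =>
    hH.orthog hij hmi hmj <| (hH.isBalanced_sub hmk).of_affine 1 c one_ne_zero fun x => by
      linear_combination hc x
  have hbal : ∀ m, IsBalanced fun x => (H r x + (H j x - H i x)) - H m x := by
    intro m
    by_cases hmr : m = r
    · exact (hH.isBalanced_sub hij.symm).of_affine 1 0 one_ne_zero fun x => by
        rw [hmr]; ring
    by_cases hmi : m = i
    · exact (hH.isBalanced_sub hrk).of_affine 1 c one_ne_zero fun x => by
        rw [hmi]; linear_combination hc x - H i x * three_eq_zero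
    by_cases hmj : m = j
    · exact (hH.isBalanced_sub hri).of_affine 1 0 one_ne_zero fun x => by
        rw [hmj]; ring
    by_cases hmk : m = k
    · exact (hH.isBalanced_sub hrj).of_affine 1 (-c) one_ne_zero fun x => by
        rw [hmk]; linear_combination -hc x + H j x * three_eq_zero
    rcases (orth r hri hrj hrk).affine_or_balanced (orth m hmi hmj hmk)
      (by simpa using hH.isBalanced_sub (Ne.symm hmr)) with ⟨ε, d, hε, h⟩ | h
    · rcases eq_one_or_eq_neg_one hε with rfl | rfl
      · exact (hH.isBalanced_sub hij.symm).of_affine 2 d (by decide) fun x => by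
          linear_combination h x
      · exact absurd (fun x => by linear_combination h x) (hno' m d)
    · exact h.of_affine 1 0 one_ne_zero fun x => by ring
  have hsum := sum_row_sq hι hH fun x => H r x + (H j x - H i x)
  rw [Finset.sum_congr rfl fun m _ => (hbal m).sum_sq] at hsum
  simp [hι] at hsum

end Lines

theorem two_le_kerDim_ghCode_of_card_eq_three {F : Type*} [Field F] [Fintype F] [DecidableEq F]
    (hF : Fintype.card F = 3) (hι : Fintype.card ι = 9) {H : Matrix ι ι F} (hH : IsGH 3 H) :
    2 ≤ kerDim (ghCode H) := by
  let φ : ZMod 3 ≃+* F := ZMod.ringEquivOfPrime F Nat.prime_three hF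
  let G : Matrix ι ι (ZMod 3) := fun i s => φ.symm (H i s)
  have hφ : ∀ i s, φ (G i s) = H i s := fun i s => φ.apply_symm_apply _
  have hG : IsGH 3 G := by
    intro i j hij a
    refine Eq.trans ?_ (hH i j hij (φ a))
    congr 1
    ext s
    simp only [Finset.mem_filter, Finset.mem_univ, true_and]
    rw [← φ.injective.eq_iff, map_sub, hφ, hφ]
  obtain ⟨i, j, k, hij, -, -, c, hc⟩ := exists_line hι hG
  let f : ι → F := fun x => H j x - H i x
  have hadd : ∀ v ∈ ghCode H, f + v ∈ ghCode H := by
    rintro _ ⟨β, r, rfl⟩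
    obtain ⟨m, d, hm⟩ := exists_row_add hι hG hij hc r
    refine ⟨φ d + β, m, ?_⟩
    funext x
    have := congrArg φ (hm x)
    simp only [map_add, map_sub, hφ] at this
    simp only [Pi.add_apply, f]
    linear_combination this
  have hf : f ∈ kerSet (ghCode H) := by
    rw [mem_kerSet_iff]
    intro α v hv
    obtain ⟨z, rfl⟩ := φ.surjective α
    revert z
    rw [zmod3_forall]
    refine ⟨?_, ?_, ?_⟩
    · simpa using hv
    · simpa using hadd v hv
    · have h2 := hadd _ (hadd v hv)
      rwa [← add_assoc, ← two_smul F f, ← map_ofNat φ 2] at h2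
  have hbal := hG.isBalanced_sub hij.symm
  obtain ⟨x, hx⟩ : ∃ x, ¬ G j x - G i x = 0 := not_forall.1 (hbal.ne_const 0)
  obtain ⟨y, hy⟩ : ∃ y, G j y - G i y = 0 := by
    by_contra h
    have := hbal 0
    rw [valueCount, Finset.filter_false_of_mem fun y _ hy => h ⟨y, hy⟩] at this
    simp at this
  refine two_le_kerDim (one_mem_kerSet_ghCode H) hf (x := x) (y := y) fun hxy => hx ?_
  have e : ∀ x, f x = φ (G j x - G i x) := fun x => by rw [map_sub, hφ, hφ]
  rw [e, e, hy] at hxy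
  exact φ.injective hxy

end OrderNine

section Construction

variable {F : Type*} [Field F]

open Matrix

/-- The functions `t ↦ j ⬝ᵥ σ t + α`. -/
def affineForms {b : ℕ} (σ : (Fin b → F) → (Fin b → F)) : Submodule F ((Fin b → F) → F) :=
  LinearMap.range
    ({ toFun := fun p t => p.1 ⬝ᵥ σ t + p.2
       map_add' := fun p r => by
        funext t
        simp only [Prod.fst_add, Prod.snd_add, add_dotProduct, Pi.add_apply]
        ring
       map_smul' := fun c p => by
        funext t
        simp only [Prod.smul_fst, Prod.smul_snd, smul_dotProduct, Pi.smul_apply, smul_eq_mul,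
          RingHom.id_apply]
        ring } : (Fin b → F) × F →ₗ[F] ((Fin b → F) → F))

theorem mem_affineForms {b : ℕ} {σ : (Fin b → F) → (Fin b → F)} {w : (Fin b → F) → F} :
    w ∈ affineForms σ ↔ ∃ j α, ∀ t, w t = j ⬝ᵥ σ t + α := by
  constructor
  · rintro ⟨⟨j, α⟩, rfl⟩
    exact ⟨j, α, fun t => rfl⟩
  · rintro ⟨j, α, h⟩
    exact ⟨⟨j, α⟩, funext fun t => (h t).symm⟩

theorem one_mem_affineForms {b : ℕ} (σ : (Fin b → F) → (Fin b → F)) :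
    (1 : (Fin b → F) → F) ∈ affineForms σ :=
  mem_affineForms.2 ⟨0, 1, fun t => by simp⟩

theorem finrank_affineForms_id (b : ℕ) :
    Module.finrank F (affineForms (id : (Fin b → F) → (Fin b → F))) = b + 1 := by
  rw [affineForms, LinearMap.finrank_range_of_inj]
  · simp
  · rintro ⟨j, α⟩ ⟨j', α'⟩ h
    replace h : ∀ t, j ⬝ᵥ t + α = j' ⬝ᵥ t + α' := fun t => congrFun h t
    have hα : α = α' := by simpa using h 0
    subst hα
    have hj : j = j' := dotProduct_eq j j' fun t => add_right_cancel (h t)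
    rw [hj]

/-- The matrix whose rows are `(s, t) ↦ i ⬝ᵥ s + j ⬝ᵥ π i t + v i t`. -/
def twistedMatrix {a b : ℕ} (π : (Fin a → F) → Equiv.Perm (Fin b → F))
    (v : (Fin a → F) → (Fin b → F) → F) :
    Matrix ((Fin a → F) × (Fin b → F)) ((Fin a → F) × (Fin b → F)) F :=
  fun p r => p.1 ⬝ᵥ r.1 + p.2 ⬝ᵥ π p.1 r.2 + v p.1 r.2

section Hadamard

variable [Fintype F] [DecidableEq F]

theorem card_dotProduct_eq {n : ℕ} {d : Fin (n + 1) → F} (hd : d ≠ 0) (c : F) :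
    (Finset.univ.filter fun s => d ⬝ᵥ s = c).card = Fintype.card F ^ n := by
  let L : (Fin (n + 1) → F) →ₗ[F] F := dotProductBilin F F d
  have hL : Function.Surjective L := by
    obtain ⟨i, hi⟩ := Function.ne_iff.1 hd
    intro x
    refine ⟨Pi.single i ((d i)⁻¹ * x), ?_⟩
    change d ⬝ᵥ _ = x
    rw [dotProduct_single, mul_inv_cancel_left₀ hi]
  have hfib : ∀ x y : F, (Finset.univ.filter fun s => d ⬝ᵥ s = x).card =
      (Finset.univ.filter fun s => d ⬝ᵥ s = y).card := by
    intro x y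
    obtain ⟨s₀, hs₀⟩ := hL (y - x)
    replace hs₀ : d ⬝ᵥ s₀ = y - x := hs₀
    refine Finset.card_equiv (Equiv.addRight s₀) fun s => ?_
    simp only [Finset.mem_filter, Finset.mem_univ, true_and, Equiv.coe_addRight, dotProduct_add,
      hs₀]
    constructor <;> intro h <;> linear_combination h
  have hsum := Finset.card_eq_sum_card_fiberwise (f := fun s => d ⬝ᵥ s)
    (s := (Finset.univ : Finset (Fin (n + 1) → F))) (t := Finset.univ) (by simp)
  simp only [fun x => hfib x c] at hsum
  rw [Finset.sum_const, Finset.card_univ, Finset.card_univ, Fintype.card_fun, Fintype.card_fin,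
    smul_eq_mul, pow_succ'] at hsum
  exact (Nat.eq_of_mul_eq_mul_left Fintype.card_pos hsum).symm

theorem isGH_twistedMatrix {a b h : ℕ} (hb : b ≠ 0) (hab : a + b = h)
    (π : (Fin a → F) → Equiv.Perm (Fin b → F)) (v : (Fin a → F) → (Fin b → F) → F) :
    IsGH (Fintype.card F ^ (h - 1)) (twistedMatrix π v) := by
  rintro ⟨i, j⟩ ⟨i', j'⟩ hne c
  by_cases hi : i = i'
  · subst hi
    have hj : j - j' ≠ 0 := sub_ne_zero.2 fun h => hne (by rw [h])
    obtain ⟨b, rfl⟩ := Nat.exists_eq_succ_of_ne_zero hb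
    have hcard : (Finset.univ.filter fun t => (j - j') ⬝ᵥ π i t = c).card =
        Fintype.card F ^ b := by
      rw [← card_dotProduct_eq hj c]
      exact Finset.card_equiv (π i) (by simp)
    have hset : (Finset.univ.filter fun r : (Fin a → F) × (Fin (b + 1) → F) =>
        twistedMatrix π v (i, j) r - twistedMatrix π v (i, j') r = c) =
        Finset.univ ×ˢ Finset.univ.filter fun t => (j - j') ⬝ᵥ π i t = c := by
      ext ⟨s, t⟩
      simp [twistedMatrix, sub_dotProduct]
    rw [hset, Finset.card_product, hcard, Finset.card_univ, Fintype.card_fun, Fintype.card_fin,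
      ← pow_add, ← hab]
    congr 1
  · have hd : i - i' ≠ 0 := sub_ne_zero.2 hi
    obtain ⟨a, rfl⟩ : ∃ a', a = a' + 1 := by
      refine Nat.exists_eq_succ_of_ne_zero ?_
      rintro rfl
      exact hi (Subsingleton.elim _ _)
    rw [Finset.card_filter, Fintype.sum_prod_type_right]
    have hcard : ∀ t, (∑ s, if twistedMatrix π v (i, j) (s, t) -
        twistedMatrix π v (i', j') (s, t) = c then 1 else 0) = Fintype.card F ^ a := by
      intro t
      rw [← Finset.card_filter, ← card_dotProduct_eq hd
        (c - (j ⬝ᵥ π i t + v i t) + (j' ⬝ᵥ π i' t + v i' t))]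
      congr 1
      ext s
      rw [Finset.mem_filter_univ, Finset.mem_filter_univ, sub_dotProduct]
      simp only [twistedMatrix]
      constructor <;> intro h <;> linear_combination h
    simp only [hcard]
    rw [Finset.sum_const, Finset.card_univ, Fintype.card_fun, Fintype.card_fin, smul_eq_mul,
      ← pow_add]
    congr 1
    omega

end Hadamard

theorem mem_ghCode_twistedMatrix {a b : ℕ} {π : (Fin a → F) → Equiv.Perm (Fin b → F)}
    {v : (Fin a → F) → (Fin b → F) → F} {x : (Fin a → F) × (Fin b → F) → F} :
    x ∈ ghCode (twistedMatrix π v) ↔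
      ∃ i, ∃ w ∈ affineForms (π i), ∀ s t, x (s, t) = i ⬝ᵥ s + v i t + w t := by
  constructor
  · rintro ⟨α, ⟨i, j⟩, rfl⟩
    refine ⟨i, fun t => j ⬝ᵥ π i t + α, mem_affineForms.2 ⟨j, α, fun t => rfl⟩, fun s t => ?_⟩
    simp only [twistedMatrix]
    ring
  · rintro ⟨i, w, hw, hx⟩
    obtain ⟨j, α, h⟩ := mem_affineForms.1 hw
    refine ⟨α, (i, j), ?_⟩
    funext ⟨s, t⟩
    rw [hx, h, twistedMatrix]
    ring

/-- If no nonzero `i₀` gives a kernel vector, the kernel consists of the functions of the second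
coordinate lying in every span. -/
theorem kerDim_twistedMatrix {a b : ℕ} {π : (Fin a → F) → Equiv.Perm (Fin b → F)}
    {v : (Fin a → F) → (Fin b → F) → F} (hv : v 0 = 0)
    (hsep : ∀ i₀ ≠ 0, ∀ w₀ ∈ affineForms (π i₀), ∃ (α : F) (i : Fin a → F),
      ∃ w ∈ affineForms (π i),
        α • (v i₀ + w₀) + v i + w - v (α • i₀ + i) ∉ affineForms (π (α • i₀ + i))) :
    kerDim (ghCode (twistedMatrix π v)) =
      Module.finrank F (⨅ i, affineForms (π i) : Submodule F ((Fin b → F) → F)) := by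
  let P : ((Fin b → F) → F) →ₗ[F] ((Fin a → F) × (Fin b → F) → F) := LinearMap.funLeft F F Prod.snd
  have hP : Function.Injective P := LinearMap.funLeft_injective_of_surjective F F _
    Prod.snd_surjective
  have hzero : (0 : (Fin a → F) × (Fin b → F) → F) ∈ ghCode (twistedMatrix π v) :=
    mem_ghCode_twistedMatrix.2 ⟨0, 0, zero_mem _, fun s t => by simp [hv]⟩
  rw [kerDim_of_kerSet_eq ((⨅ i, affineForms (π i)).map P),
    LinearEquiv.finrank_eq (Submodule.equivMapOfInjective P hP _).symm]
  ext x
  rw [mem_kerSet_iff]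
  constructor
  · intro hx
    have hx1 := hx 1 0 hzero
    rw [one_smul, add_zero] at hx1
    obtain ⟨i₀, w₀, hw₀, hxw⟩ := mem_ghCode_twistedMatrix.1 hx1
    have key : ∀ (α : F) (i : Fin a → F), ∀ w ∈ affineForms (π i),
        α • (v i₀ + w₀) + v i + w - v (α • i₀ + i) ∈ affineForms (π (α • i₀ + i)) := by
      intro α i w hw
      obtain ⟨i', w', hw', h⟩ := mem_ghCode_twistedMatrix.1 <|
        hx α (fun p => i ⬝ᵥ p.1 + v i p.2 + w p.2) <|
          mem_ghCode_twistedMatrix.2 ⟨i, w, hw, fun s t => rfl⟩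
      simp only [Pi.add_apply, Pi.smul_apply, hxw, smul_eq_mul] at h
      have hi : α • i₀ + i = i' := by
        refine dotProduct_eq _ _ fun s => ?_
        have h1 := h s 0
        have h2 := h 0 0
        simp only [dotProduct_zero] at h2
        rw [add_dotProduct, smul_dotProduct, smul_eq_mul]
        linear_combination h1 - h2
      subst hi
      convert hw' using 1
      funext t
      have h2 := h 0 t
      simp only [dotProduct_zero] at h2
      simp only [Pi.add_apply, Pi.sub_apply, Pi.smul_apply, smul_eq_mul]
      linear_combination h2
    have hi₀ : i₀ = 0 := by
      by_contra hne
      obtain ⟨α, i, w, hw, hnot⟩ := hsep i₀ hne w₀ hw₀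
      exact hnot (key α i w hw)
    subst hi₀
    refine ⟨w₀, ?_, ?_⟩
    · rw [SetLike.mem_coe, Submodule.mem_iInf]
      intro i
      simpa [hv] using key 1 i 0 (zero_mem _)
    · funext ⟨s, t⟩
      rw [hxw]
      simp [P, LinearMap.funLeft_apply, hv]
  · rintro ⟨w₀, hw₀, rfl⟩ α c hc
    rw [SetLike.mem_coe, Submodule.mem_iInf] at hw₀
    obtain ⟨i, w, hw, h⟩ := mem_ghCode_twistedMatrix.1 hc
    refine mem_ghCode_twistedMatrix.2
      ⟨i, α • w₀ + w, add_mem (Submodule.smul_mem _ _ (hw₀ i)) hw, fun s t => ?_⟩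
    simp only [Pi.add_apply, Pi.smul_apply, h, P, LinearMap.funLeft_apply, smul_eq_mul]
    ring

theorem exists_normalized_twistedMatrix [Fintype F] [DecidableEq F] {a b h : ℕ} (hb : b ≠ 0)
    (hab : a + b = h) (π : (Fin a → F) → Equiv.Perm (Fin b → F)) (hπ : ∀ i, π i 0 = 0)
    (v : (Fin a → F) → (Fin b → F) → F) (hv : v 0 = 0) (hv' : ∀ i, v i 0 = 0) :
    ∃ H : Matrix (Fin (Fintype.card F ^ h)) (Fin (Fintype.card F ^ h)) F,
      IsGH (Fintype.card F ^ (h - 1)) H ∧ Normalized H ∧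
        kerDim (ghCode H) = kerDim (ghCode (twistedMatrix π v)) := by
  refine exists_normalized_of_card ?_ (isGH_twistedMatrix hb hab π v) 0 ?_
  · simp [← hab, pow_add]
  · rintro i s (rfl | rfl)
    · simp [twistedMatrix, hv]
    · simp [twistedMatrix, hπ, hv']

theorem exists_kerDim_eq_of_le [Fintype F] [DecidableEq F] (hF : 2 < Fintype.card F) {h k : ℕ}
    (hk : 2 ≤ k) (hkh : k ≤ h + 1) :
    ∃ H : Matrix (Fin (Fintype.card F ^ h)) (Fin (Fintype.card F ^ h)) F,
      IsGH (Fintype.card F ^ (h - 1)) H ∧ Normalized H ∧ kerDim (ghCode H) = k := by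
  obtain ⟨b, rfl⟩ : ∃ b, k = b + 1 + 1 := ⟨k - 2, by omega⟩
  obtain ⟨a, hab⟩ : ∃ a, a + (b + 1) = h := ⟨h - (b + 1), by omega⟩
  obtain ⟨z, hz⟩ : ∃ z : F, z ∉ ({0, 1} : Finset F) := by
    obtain ⟨z, -, hz⟩ := Finset.exists_mem_notMem_of_card_lt_card
      (Finset.card_le_two.trans_lt (hF.trans_eq Finset.card_univ.symm))
    exact ⟨z, hz⟩
  rw [Finset.mem_insert, Finset.mem_singleton, not_or] at hz
  obtain ⟨hz0, hz1⟩ := hz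
  let g : (Fin (b + 1) → F) → F := fun t => t 0 ^ 2
  have hg : ∀ α : F, α ≠ 0 → α • g ∉ affineForms (id : (Fin (b + 1) → F) → (Fin (b + 1) → F)) := by
    intro α hα hmem
    obtain ⟨j, c, hj⟩ := mem_affineForms.1 hmem
    have h0 : 0 = c := by simpa [g] using hj 0
    have h1 : α = j 0 + c := by simpa [g] using hj (Pi.single 0 1)
    have h2 : α * z ^ 2 = j 0 * z + c := by simpa [g] using hj (Pi.single 0 z)
    have h3 : α * z * (z - 1) = 0 := by linear_combination h2 - z * h1 + (z - 1) * h0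
    exact mul_ne_zero (mul_ne_zero hα hz0) (sub_ne_zero.2 hz1) h3
  let v : (Fin a → F) → (Fin (b + 1) → F) → F := fun i =>
    if i = 0 ∨ i ≠ 1 then 0 else g
  obtain ⟨H, hH, hN, hker⟩ := exists_normalized_twistedMatrix (Nat.succ_ne_zero b) hab
    (fun _ => 1) (fun _ => rfl) v (by simp [v])
    (by intro i; by_cases h : i = 0 ∨ i ≠ 1 <;> simp [v, g, h])
  refine ⟨H, hH, hN, ?_⟩
  rw [hker, kerDim_twistedMatrix (by simp [v])]
  · rw [iInf_const]
    exact finrank_affineForms_id (b + 1)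
  · intro i₀ hi₀ w₀ hw₀
    have h10 : (1 : Fin a → F) ≠ 0 := fun h =>
      hi₀ <| funext fun x => absurd (congrFun h x) one_ne_zero
    have hv1 : v 1 = g := by simp [v, h10]
    by_cases hi₁ : i₀ = 1
    · subst hi₁
      refine ⟨z, 0, 0, zero_mem _, fun hmem => hg z hz0 ?_⟩
      have hz : v (z • 1) = 0 := by
        refine if_pos (Or.inr fun h => hz1 ?_)
        obtain ⟨x, -⟩ := Function.ne_iff.1 h10
        simpa using congrFun h x
      have h0 : v 0 = 0 := by simp [v]
      rw [add_zero, add_zero, hz, hv1, h0, sub_zero, add_zero, smul_add] at hmem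
      exact (Submodule.add_mem_iff_left _ (Submodule.smul_mem _ z hw₀)).1 hmem
    · refine ⟨1, 1, 0, zero_mem _, fun hmem => hg 1 one_ne_zero ?_⟩
      have h0 : v i₀ = 0 := if_pos (Or.inr hi₁)
      have h1 : v (1 • i₀ + 1) = 0 := if_pos (Or.inr fun h => hi₀ (by simpa using h))
      rw [one_smul, one_smul, h0, hv1, zero_add, add_zero] at hmem
      rw [one_smul] at h1 ⊢
      rw [h1, sub_zero] at hmem
      exact (Submodule.add_mem_iff_right _ hw₀).1 hmem

theorem kerDim_twistedMatrix_eq_one {a b : ℕ} {π : (Fin a → F) → Equiv.Perm (Fin b → F)}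
    (e : Fin a → F) {w : (Fin b → F) → F} (hw : w ∈ affineForms (π e))
    (hne : ∀ i ≠ e, w ∉ affineForms (π i))
    (hconst : ∀ f, (∀ i, f ∈ affineForms (π i)) → ∀ t, f t = f 0) :
    kerDim (ghCode (twistedMatrix π 0)) = 1 := by
  rw [kerDim_twistedMatrix rfl]
  · refine finrank_eq_one ⟨1, ?_⟩ ?_ ?_
    · exact (Submodule.mem_iInf _).2 fun i => one_mem_affineForms _
    · intro h
      exact one_ne_zero (congrFun (congrArg Subtype.val h) 0)
    · rintro ⟨f, hf⟩
      refine ⟨f 0, Subtype.ext (funext fun t => ?_)⟩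
      simpa using (hconst f ((Submodule.mem_iInf _).1 hf) t).symm
  · intro i₀ hi₀ w₀ hw₀
    by_cases h : w₀ ∈ affineForms (π (i₀ + e))
    · refine ⟨1, e, w, hw, fun hmem => hne (i₀ + e) (by simpa using hi₀) ?_⟩
      refine (Submodule.add_mem_iff_right _ h).1 ?_
      simpa using hmem
    · exact ⟨1, e, 0, zero_mem _, by simpa using h⟩

theorem exists_kerDim_eq_one_of_three_lt_card [Fintype F] [DecidableEq F]
    (hF : 3 < Fintype.card F) {h : ℕ} (hh : 2 ≤ h) :
    ∃ H : Matrix (Fin (Fintype.card F ^ h)) (Fin (Fintype.card F ^ h)) F,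
      IsGH (Fintype.card F ^ (h - 1)) H ∧ Normalized H ∧ kerDim (ghCode H) = 1 := by
  obtain ⟨a, rfl⟩ : ∃ a, h = a + 1 + 1 := ⟨h - 2, by omega⟩
  obtain ⟨y, hy⟩ : ∃ y : F, y ∉ ({0, 1} : Finset F) := by
    obtain ⟨y, -, hy⟩ := Finset.exists_mem_notMem_of_card_lt_card
      (Finset.card_le_two.trans_lt ((Nat.lt_of_succ_lt hF).trans_eq Finset.card_univ.symm))
    exact ⟨y, hy⟩
  obtain ⟨z, hz⟩ : ∃ z : F, z ∉ ({0, 1, y} : Finset F) := by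
    obtain ⟨z, -, hz⟩ := Finset.exists_mem_notMem_of_card_lt_card
      (Finset.card_le_three.trans_lt (hF.trans_eq Finset.card_univ.symm))
    exact ⟨z, hz⟩
  simp only [Finset.mem_insert, Finset.mem_singleton, not_or] at hy hz
  obtain ⟨hy0, hy1⟩ := hy
  obtain ⟨hz0, hz1, hzy⟩ := hz
  let σ : Equiv.Perm (Fin 1 → F) := Equiv.swap (fun _ => 1) (fun _ => y)
  have hσ0 : σ 0 = 0 := Equiv.swap_apply_of_ne_of_ne
    (fun h => zero_ne_one (congrFun h 0)) (fun h => hy0 (congrFun h 0).symm)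
  have hσz : σ (fun _ => z) = fun _ => z := Equiv.swap_apply_of_ne_of_ne
    (fun h => hz1 (congrFun h 0)) (fun h => hzy (congrFun h 0))
  have hσ1 : σ (fun _ => 1) = fun _ => y := Equiv.swap_apply_left _ _
  let π : (Fin (a + 1) → F) → Equiv.Perm (Fin 1 → F) := fun i => if i = 1 then σ else 1
  have hπ1 : π 1 = σ := if_pos rfl
  have hπ : ∀ i ≠ 1, π i = 1 := fun i hi => if_neg hi
  have hform : ∀ {w : (Fin 1 → F) → F}, w ∈ affineForms σ →
      w ∈ affineForms (1 : Equiv.Perm (Fin 1 → F)) → ∀ t, w t = w 0 := by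
    intro w hw hw'
    obtain ⟨j, c, hj⟩ := mem_affineForms.1 hw
    obtain ⟨l, d, hl⟩ := mem_affineForms.1 hw'
    have h0 : c = d := by simpa [hσ0] using (hj 0).symm.trans (hl 0)
    have hz : j 0 * z + c = l 0 * z + d := by
      simpa [hσz, dotProduct] using (hj fun _ => z).symm.trans (hl fun _ => z)
    have h1 : j 0 * y + c = l 0 + d := by
      simpa [hσ1, dotProduct] using (hj fun _ => 1).symm.trans (hl fun _ => 1)
    have hjl : j 0 = l 0 := mul_right_cancel₀ hz0 (by linear_combination hz - h0)
    have hj0 : l 0 = 0 := by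
      refine (mul_eq_zero.1 ?_).resolve_right (sub_ne_zero.2 hy1)
      linear_combination h1 - h0 - y * hjl
    intro t
    rw [hl, hl]
    simp [dotProduct, hj0]
  obtain ⟨H, hH, hN, hker⟩ := exists_normalized_twistedMatrix one_ne_zero rfl π
    (fun i => by by_cases hi : i = 1 <;> simp [π, hi, hσ0]) 0 rfl (fun _ => rfl)
  refine ⟨H, hH, hN, hker.trans ?_⟩
  have hw : (fun t => σ t 0) ∈ affineForms σ :=
    mem_affineForms.2 ⟨1, 0, fun t => by simp [dotProduct]⟩
  refine kerDim_twistedMatrix_eq_one 1 (w := fun t => σ t 0) (by rwa [hπ1]) ?_ ?_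
  · intro i hi hmem
    rw [hπ i hi] at hmem
    have := hform hw hmem fun _ => z
    simp only [hσz, hσ0] at this
    exact hz0 this
  · intro f hf
    exact hform (hπ1 ▸ hf 1) (hπ 0 zero_ne_one ▸ hf 0)

/-- The permutation `t ↦ t + t l ^ 2 • e_k` of the plane, for `k ≠ l`. -/
def quadraticShear {b : ℕ} {k l : Fin b} (hkl : k ≠ l) : Equiv.Perm (Fin b → F) where
  toFun t := t + Pi.single k (t l ^ 2)
  invFun t := t - Pi.single k (t l ^ 2)
  left_inv t := by simp [hkl.symm]
  right_inv t := by simp [hkl.symm]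

theorem exists_kerDim_eq_one_of_two_ne_zero [Fintype F] [DecidableEq F]
    (h2 : (2 : F) ≠ 0) {h : ℕ} (hh : 3 ≤ h) :
    ∃ H : Matrix (Fin (Fintype.card F ^ h)) (Fin (Fintype.card F ^ h)) F,
      IsGH (Fintype.card F ^ (h - 1)) H ∧ Normalized H ∧ kerDim (ghCode H) = 1 := by
  obtain ⟨a, rfl⟩ : ∃ a, h = a + 1 + 2 := ⟨h - 3, by omega⟩
  let σ : Equiv.Perm (Fin 2 → F) := quadraticShear (k := 0) (l := 1) zero_ne_one
  let τ : Equiv.Perm (Fin 2 → F) := quadraticShear (k := 1) (l := 0) one_ne_zero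
  have hσ : ∀ (j : Fin 2 → F) x y, j ⬝ᵥ σ ![x, y] = j 0 * (x + y ^ 2) + j 1 * y := fun j x y => by
    simp [σ, quadraticShear, dotProduct, Fin.sum_univ_two]
  have hτ : ∀ (j : Fin 2 → F) x y, j ⬝ᵥ τ ![x, y] = j 0 * x + j 1 * (y + x ^ 2) := fun j x y => by
    simp [τ, quadraticShear, dotProduct, Fin.sum_univ_two]
  have h1 : ∀ (j : Fin 2 → F) x y, j ⬝ᵥ ![x, y] = j 0 * x + j 1 * y := fun j x y => by
    simp [dotProduct, Fin.sum_univ_two]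
  have hne : (1 : Fin (a + 1) → F) ≠ -1 := by
    intro h
    have h0 := congrFun h 0
    simp only [Pi.one_apply, Pi.neg_apply] at h0
    exact h2 (by linear_combination h0)
  let π : (Fin (a + 1) → F) → Equiv.Perm (Fin 2 → F) := fun i =>
    if i = 1 then σ else if i = -1 then τ else 1
  have hπ1 : π 1 = σ := if_pos rfl
  have hπ2 : π (-1) = τ := by simp [π, hne.symm]
  have hπ0 : π 0 = 1 := by simp [π]
  obtain ⟨H, hH, hN, hker⟩ := exists_normalized_twistedMatrix two_ne_zero rfl π
    (fun i => by
      by_cases hi : i = 1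
      · simp [π, hi, σ, quadraticShear]
      · by_cases hi' : i = -1 <;> simp [π, hi, hi', hne.symm, τ, quadraticShear])
    0 rfl (fun _ => rfl)
  refine ⟨H, hH, hN, hker.trans ?_⟩
  refine kerDim_twistedMatrix_eq_one 1 (w := fun t => ![1, 0] ⬝ᵥ σ t) ?_ ?_ ?_
  · rw [hπ1]
    exact mem_affineForms.2 ⟨![1, 0], 0, fun t => (add_zero _).symm⟩
  · intro i hi hmem
    obtain ⟨j, c, hj⟩ := mem_affineForms.1 hmem
    have e0 := hj ![0, 0]
    have e1 := hj ![0, 1]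
    have e2 := hj ![0, -1]
    by_cases hi' : i = -1
    · rw [hi', hπ2] at e0 e1 e2
      simp only [hσ, hτ, Matrix.cons_val_zero, Matrix.cons_val_one] at e0 e1 e2
      exact h2 (by linear_combination e1 + e2 - 2 * e0)
    · rw [show π i = 1 by simp [π, hi, hi'], Equiv.Perm.one_apply] at e0 e1 e2
      simp only [hσ, h1, Matrix.cons_val_zero, Matrix.cons_val_one] at e0 e1 e2
      exact h2 (by linear_combination e1 + e2 - 2 * e0)
  · intro f hf t
    obtain ⟨j, c, hj⟩ := mem_affineForms.1 (hπ0 ▸ hf 0)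
    obtain ⟨l, d, hl⟩ := mem_affineForms.1 (hπ1 ▸ hf 1)
    obtain ⟨m, e, hm⟩ := mem_affineForms.1 (hπ2 ▸ hf (-1))
    have hjl : ∀ x y, j 0 * x + j 1 * y + c = l 0 * (x + y ^ 2) + l 1 * y + d := fun x y => by
      rw [← h1, ← hσ, ← hl, hj, Equiv.Perm.one_apply]
    have hjm : ∀ x y, j 0 * x + j 1 * y + c = m 0 * x + m 1 * (y + x ^ 2) + e := fun x y => by
      rw [← h1, ← hτ, ← hm, hj, Equiv.Perm.one_apply]
    have hl0 : l 0 = 0 := by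
      refine (mul_eq_zero.1 ?_).resolve_left h2
      linear_combination 2 * hjl 0 0 - hjl 0 1 - hjl 0 (-1)
    have hm1 : m 1 = 0 := by
      refine (mul_eq_zero.1 ?_).resolve_left h2
      linear_combination 2 * hjm 0 0 - hjm 1 0 - hjm (-1) 0
    have hj0 : j 0 = 0 := by linear_combination hjl 1 0 - hjl 0 0 + hl0
    have hj1 : j 1 = 0 := by linear_combination hjm 0 1 - hjm 0 0 + hm1
    rw [hj, hj]
    simp [dotProduct, Fin.sum_univ_two, hj0, hj1]

end Construction

theorem stmt9 {q h k : ℕ} {F : Type*} [Field F] [Fintype F] [DecidableEq F]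
    (hcard : Fintype.card F = q) (hq : 2 < q) (hh : 2 ≤ h) :
    (¬ (q = 3 ∧ h = 2) →
      ((∃ H : Matrix (Fin (q ^ h)) (Fin (q ^ h)) F,
          IsGH (q ^ (h - 1)) H ∧ Normalized H ∧ kerDim (ghCode H) = k) ↔
        1 ≤ k ∧ k ≤ h + 1)) ∧
    ((q = 3 ∧ h = 2) →
      ((∃ H : Matrix (Fin (q ^ h)) (Fin (q ^ h)) F,
          IsGH (q ^ (h - 1)) H ∧ Normalized H ∧ kerDim (ghCode H) = k) ↔
        (k = 2 ∨ k = 3))) := by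
  subst hcard
  have hle : ∀ H : Matrix (Fin (Fintype.card F ^ h)) (Fin (Fintype.card F ^ h)) F,
      Normalized H → 1 ≤ kerDim (ghCode H) ∧ kerDim (ghCode H) ≤ h + 1 := by
    intro H hN
    have hpos : 0 < Fintype.card F ^ h := pow_pos Fintype.card_pos h
    have : Nonempty (Fin (Fintype.card F ^ h)) := ⟨⟨0, hpos⟩⟩
    refine ⟨one_le_kerDim_ghCode H, kerDim_ghCode_le ⟨0, ⟨0, hpos⟩, ?_⟩ (Fintype.card_fin _)⟩
    funext s
    exact ((add_zero _).trans (hN ⟨0, hpos⟩ s (Or.inl rfl))).symm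
  constructor
  · intro hexc
    constructor
    · rintro ⟨H, -, hN, rfl⟩
      exact hle H hN
    · rintro ⟨hk1, hkh⟩
      rcases hk1.eq_or_lt with rfl | hk2
      · by_cases hF : Fintype.card F = 3
        · refine exists_kerDim_eq_one_of_two_ne_zero (fun h2 => one_ne_zero (α := F) ?_) (by omega)
          have h3 : ((3 : ℕ) : F) = 0 := hF ▸ FiniteField.cast_card_eq_zero F
          push_cast at h3
          linear_combination h3 - h2
        · exact exists_kerDim_eq_one_of_three_lt_card (by omega) hh
      · exact exists_kerDim_eq_of_le hq hk2 hkh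
  · rintro ⟨hF, rfl⟩
    constructor
    · rintro ⟨H, hH, hN, rfl⟩
      have h2 : 2 ≤ kerDim (ghCode H) :=
        two_le_kerDim_ghCode_of_card_eq_three hF (by rw [Fintype.card_fin, hF]; norm_num)
          (by simpa [hF] using hH)
      have := (hle H hN).2
      omega
    · intro hk
      exact exists_kerDim_eq_of_le hq (by omega) (by omega)
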